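/- arXiv:2411.17400 — 2 statements merged into one kernel-verified Lean document; each statement's English description precedes it below -/
import Mathlib

section
/- Let W₀ ~ N_m(0, Γ̄) and W ~ N_d(0, Ψ) be independent, let U have the distribution of (W₀ | W₀ + τ > 0), and set Y = ξ + H U + W. Then the density of Y at y equals φ_d(y; ξ, Ψ + H Γ̄ Hᵀ) · Φ_m(μ(y) + τ; 0, Σ*) / Φ_m(τ; 0, Γ̄), where μ(y) = Γ̄ Hᵀ (Ψ + H Γ̄ Hᵀ)^{-1}(y − ξ) and Σ* = Γ̄ − Γ̄ Hᵀ (Ψ + H Γ̄ Hᵀ)^{-1} H Γ̄. -/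
open Matrix MeasureTheory ProbabilityTheory

/-- The multivariate Gaussian density with mean `μ` and covariance `S`. -/
noncomputable def gaussPdf {ι : Type*} [Fintype ι] [DecidableEq ι] (μ : ι → ℝ)
    (S : Matrix ι ι ℝ) (x : ι → ℝ) : ℝ :=
  (2 * Real.pi) ^ (-(Fintype.card ι : ℝ) / 2) * S.det ^ (-(1 : ℝ) / 2) *
    Real.exp (-((x - μ) ⬝ᵥ (S⁻¹ *ᵥ (x - μ))) / 2)

/-- `Φ_k(a; 0, S)`: the centered multivariate Gaussian cdf (componentwise). -/
noncomputable def gaussCdf {ι : Type*} [Fintype ι] [DecidableEq ι]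
    (S : Matrix ι ι ℝ) (a : ι → ℝ) : ℝ :=
  ∫ v in {v : ι → ℝ | ∀ i, v i ≤ a i}, gaussPdf (0 : ι → ℝ) S v

section GaussPdf

variable {ι : Type*} [Fintype ι] [DecidableEq ι]

lemma gaussPdf_pos {S : Matrix ι ι ℝ} (hS : S.PosDef) (μ x : ι → ℝ) : 0 < gaussPdf μ S x := by
  have := hS.det_pos
  have := Real.pi_pos
  unfold gaussPdf
  positivity

lemma continuous_gaussPdf (μ : ι → ℝ) (S : Matrix ι ι ℝ) : Continuous (gaussPdf μ S) := by
  unfold gaussPdf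
  simp only [dotProduct, mulVec]
  fun_prop

/-- `gaussPdf` depends on its point and mean only through their difference. -/
lemma gaussPdf_eq_of_sub_eq {S : Matrix ι ι ℝ} {μ ν x y : ι → ℝ} (h : x - μ = y - ν) :
    gaussPdf μ S x = gaussPdf ν S y := by
  rw [gaussPdf, gaussPdf, h]

lemma gaussPdf_self_sub (S : Matrix ι ι ℝ) (μ v : ι → ℝ) :
    gaussPdf μ S (μ - v) = gaussPdf 0 S v := by
  simp [gaussPdf, mulVec_neg]

open scoped MatrixOrder Matrix.Norms.L2Operator in
lemma exists_isUnit_eq_transpose_mul_self {S : Matrix ι ι ℝ} (hS : S.PosDef) :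
    ∃ C : Matrix ι ι ℝ, IsUnit C ∧ S = Cᵀ * C := by
  simpa only [star_eq_conjTranspose, conjTranspose_eq_transpose_of_trivial] using
    CStarAlgebra.isStrictlyPositive_iff_eq_star_mul_self.mp hS.isStrictlyPositive

lemma integrable_gaussPdf {S : Matrix ι ι ℝ} (hS : S.PosDef) (μ : ι → ℝ) :
    Integrable (gaussPdf μ S) := by
  suffices h : Integrable (fun x : ι → ℝ ↦ Real.exp (-(x ⬝ᵥ (S⁻¹ *ᵥ x)) / 2)) from
    (h.comp_sub_right μ).const_mul _
  obtain ⟨C, hC, hSC⟩ := exists_isUnit_eq_transpose_mul_self hS.inv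
  have hdet : C.det ≠ 0 := ((Matrix.isUnit_iff_isUnit_det _).mp hC).ne_zero
  have hstd : Integrable (fun x : ι → ℝ ↦ ∏ i, Real.exp (-(1 / 2) * x i ^ 2)) :=
    Integrable.fintype_prod (f := fun _ (t : ℝ) ↦ Real.exp (-(1 / 2) * t ^ 2))
      fun _ ↦ integrable_exp_neg_mul_sq (by norm_num)
  have hmap : Integrable (fun x : ι → ℝ ↦ ∏ i, Real.exp (-(1 / 2) * x i ^ 2))
      (Measure.map (toLin' C) volume) := by
    rw [Real.map_matrix_volume_pi_eq_smul_volume_pi hdet]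
    exact hstd.smul_measure ENNReal.ofReal_ne_top
  have hmeas : Measurable (toLin' C) := (LinearMap.continuous_on_pi _).measurable
  refine (hmap.comp_measurable hmeas).congr (ae_of_all _ fun x ↦ ?_)
  have hquad : x ⬝ᵥ (S⁻¹ *ᵥ x) = ∑ i, (C *ᵥ x) i ^ 2 := by
    rw [hSC, ← mulVec_mulVec, dotProduct_mulVec, vecMul_transpose]
    simp [dotProduct, sq]
  simp only [Function.comp_apply, toLin'_apply]
  rw [hquad, ← Real.exp_sum, ← Finset.mul_sum]
  ring_nf

lemma setLIntegral_gaussPdf {S : Matrix ι ι ℝ} (hS : S.PosDef) (μ τ : ι → ℝ) :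
    ∫⁻ u in {u : ι → ℝ | ∀ i, 0 < u i + τ i}, ENNReal.ofReal (gaussPdf μ S u) =
      ENNReal.ofReal (gaussCdf S (μ + τ)) := by
  have hs : MeasurableSet {u : ι → ℝ | ∀ i, 0 < u i + τ i} := by measurability
  rw [← (Measure.measurePreserving_sub_left volume μ).setLIntegral_comp_preimage hs
    (continuous_gaussPdf μ S).measurable.ennreal_ofReal, gaussCdf,
    ofReal_integral_eq_lintegral_ofReal (integrable_gaussPdf hS 0).integrableOn
      (ae_of_all _ fun v ↦ (gaussPdf_pos hS 0 v).le)]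
  simp only [gaussPdf_self_sub]
  have hpre : (fun v ↦ μ - v) ⁻¹' {u : ι → ℝ | ∀ i, 0 < u i + τ i} =
      Set.univ.pi fun i ↦ Set.Iio ((μ + τ) i) := by
    ext v
    simp only [Set.mem_preimage, Set.mem_ofPred_eq, Set.mem_pi, Set.mem_univ, Set.mem_Iio,
      Pi.sub_apply, Pi.add_apply, true_imp_iff]
    exact forall_congr' fun i ↦ ⟨fun h ↦ by linarith, fun h ↦ by linarith⟩
  rw [hpre]
  exact setLIntegral_congr Measure.univ_pi_Iio_ae_eq_Iic

lemma gaussCdf_pos {S : Matrix ι ι ℝ} (hS : S.PosDef) (a : ι → ℝ) : 0 < gaussCdf S a := by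
  rw [← ENNReal.ofReal_pos, ← zero_add a, ← setLIntegral_gaussPdf hS,
    setLIntegral_pos_iff (continuous_gaussPdf 0 S).measurable.ennreal_ofReal]
  have hsupp : Function.support (fun u ↦ ENNReal.ofReal (gaussPdf 0 S u)) = Set.univ := by
    ext u
    simpa using gaussPdf_pos hS 0 u
  have hopen : IsOpen {u : ι → ℝ | ∀ i, 0 < u i + a i} := by
    simp only [Set.ofPred_forall]
    exact isOpen_iInter_of_finite fun i ↦ isOpen_lt (by fun_prop) (by fun_prop)
  rw [hsupp, Set.univ_inter]
  exact hopen.measure_pos volume ⟨fun i ↦ 1 - a i, fun i ↦ by simp⟩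

end GaussPdf

section ConvolutionAlgebra

variable {ι κ : Type*} [Fintype ι] [Fintype κ] {Γ : Matrix ι ι ℝ} {Ψ : Matrix κ κ ℝ}

lemma posDef_add_mul_mul_transpose (hΨ : Ψ.PosDef) (hΓ : Γ.PosDef) (H : Matrix κ ι ℝ) :
    (Ψ + H * Γ * Hᵀ).PosDef := by
  rw [← conjTranspose_eq_transpose_of_trivial]
  exact hΨ.add_posSemidef (hΓ.posSemidef.mul_mul_conjTranspose_same H)

lemma mulVec_dotProduct_eq_dotProduct_transpose_mulVec (A : Matrix κ ι ℝ) (x : ι → ℝ)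
    (y : κ → ℝ) : (A *ᵥ x) ⬝ᵥ y = x ⬝ᵥ (Aᵀ *ᵥ y) := by
  rw [dotProduct_mulVec, vecMul_transpose]

variable [DecidableEq ι] [DecidableEq κ]

lemma posDef_inv_add_transpose_mul_inv_mul (hΨ : Ψ.PosDef) (hΓ : Γ.PosDef) (H : Matrix κ ι ℝ) :
    (Γ⁻¹ + Hᵀ * Ψ⁻¹ * H).PosDef := by
  simpa using posDef_add_mul_mul_transpose hΓ.inv hΨ.inv Hᵀ

lemma conditional_covariance_eq_inv (hΨ : Ψ.PosDef) (hΓ : Γ.PosDef) (H : Matrix κ ι ℝ) :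
    Γ - Γ * Hᵀ * (Ψ + H * Γ * Hᵀ)⁻¹ * H * Γ = (Γ⁻¹ + Hᵀ * Ψ⁻¹ * H)⁻¹ := by
  have hΓi := nonsing_inv_nonsing_inv Γ ((isUnit_iff_isUnit_det _).mp hΓ.isUnit)
  have hΨi := nonsing_inv_nonsing_inv Ψ ((isUnit_iff_isUnit_det _).mp hΨ.isUnit)
  have h := add_mul_mul_inv_eq_sub Γ⁻¹ Hᵀ Ψ⁻¹ H hΓ.inv.isUnit hΨ.inv.isUnit
    (by rw [hΓi, hΨi]; exact (posDef_add_mul_mul_transpose hΨ hΓ H).isUnit)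
  rw [h, hΓi, hΨi]

lemma posDef_conditional_covariance (hΨ : Ψ.PosDef) (hΓ : Γ.PosDef) (H : Matrix κ ι ℝ) :
    (Γ - Γ * Hᵀ * (Ψ + H * Γ * Hᵀ)⁻¹ * H * Γ).PosDef := by
  rw [conditional_covariance_eq_inv hΨ hΓ]
  exact (posDef_inv_add_transpose_mul_inv_mul hΨ hΓ H).inv

lemma det_mul_det_conditional_covariance (hΨ : Ψ.PosDef) (hΓ : Γ.PosDef) (H : Matrix κ ι ℝ) :
    (Ψ + H * Γ * Hᵀ).det * (Γ - Γ * Hᵀ * (Ψ + H * Γ * Hᵀ)⁻¹ * H * Γ).det = Γ.det * Ψ.det := by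
  have hP := posDef_inv_add_transpose_mul_inv_mul hΨ hΓ H
  have hdet : (Ψ + H * Γ * Hᵀ).det = Ψ.det * (Γ.det * (Γ⁻¹ + Hᵀ * Ψ⁻¹ * H).det) := by
    rw [det_add_mul _ _ ((isUnit_iff_isUnit_det _).mp hΨ.isUnit), ← det_mul, det_mul_comm,
      Matrix.add_mul, nonsing_inv_mul _ ((isUnit_iff_isUnit_det _).mp hΓ.isUnit)]
    simp only [Matrix.mul_assoc]
  rw [conditional_covariance_eq_inv hΨ hΓ, det_nonsing_inv, hdet, Ring.inverse_eq_inv']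
  field_simp [hP.det_pos.ne']

/-- Completing the square in the joint exponent. -/
lemma quadratic_add_quadratic_sub_mulVec (hΨ : Ψ.PosDef) (hΓ : Γ.PosDef) (H : Matrix κ ι ℝ)
    (u : ι → ℝ) (z : κ → ℝ) :
    u ⬝ᵥ (Γ⁻¹ *ᵥ u) + (z - H *ᵥ u) ⬝ᵥ (Ψ⁻¹ *ᵥ (z - H *ᵥ u)) =
      z ⬝ᵥ ((Ψ + H * Γ * Hᵀ)⁻¹ *ᵥ z) +
        (u - (Γ * Hᵀ * (Ψ + H * Γ * Hᵀ)⁻¹) *ᵥ z) ⬝ᵥ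
          ((Γ⁻¹ + Hᵀ * Ψ⁻¹ * H) *ᵥ (u - (Γ * Hᵀ * (Ψ + H * Γ * Hᵀ)⁻¹) *ᵥ z)) := by
  have hΓu := (isUnit_iff_isUnit_det _).mp hΓ.isUnit
  have hΨu := (isUnit_iff_isUnit_det _).mp hΨ.isUnit
  have hΩ := posDef_add_mul_mul_transpose hΨ hΓ H
  have hΩu := (isUnit_iff_isUnit_det _).mp hΩ.isUnit
  have hP := posDef_inv_add_transpose_mul_inv_mul hΨ hΓ H
  have hPt := (conjTranspose_eq_transpose_of_trivial _).symm.trans hP.isHermitian.eq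
  have hΨt := (conjTranspose_eq_transpose_of_trivial _).symm.trans hΨ.inv.isHermitian.eq
  set Ω := Ψ + H * Γ * Hᵀ with hΩdef
  set P := Γ⁻¹ + Hᵀ * Ψ⁻¹ * H with hPdef
  set K := Γ * Hᵀ * Ω⁻¹ with hKdef
  clear_value K P Ω
  have hPK : P * K = Hᵀ * Ψ⁻¹ := by
    have : P * (Γ * Hᵀ) = Hᵀ * Ψ⁻¹ * Ω := by
      rw [hPdef, hΩdef, Matrix.add_mul, Matrix.mul_add, nonsing_inv_mul_cancel_left _ _ hΓu,
        nonsing_inv_mul_cancel_right _ _ hΨu]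
      simp only [Matrix.mul_assoc]
    rw [hKdef, ← Matrix.mul_assoc, this, mul_nonsing_inv_cancel_right _ _ hΩu]
  have hKP : Kᵀ * P = Ψ⁻¹ * H := by
    have := congrArg transpose hPK
    rwa [transpose_mul, transpose_mul, transpose_transpose, hPt, hΨt] at this
  have hKHΨ : Kᵀ * Hᵀ * Ψ⁻¹ = Ψ⁻¹ - Ω⁻¹ := by
    have : H * K = 1 - Ψ * Ω⁻¹ := by
      have hsub : H * (Γ * Hᵀ) = Ω - Ψ := by rw [hΩdef, ← Matrix.mul_assoc]; abel
      rw [hKdef, ← Matrix.mul_assoc, hsub, Matrix.sub_mul, mul_nonsing_inv _ hΩu]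
    rw [Matrix.mul_assoc, ← hPK, ← Matrix.mul_assoc, hKP, Matrix.mul_assoc, this,
      Matrix.mul_sub, Matrix.mul_one, nonsing_inv_mul_cancel_left _ _ hΨu]
  have hPuu : u ⬝ᵥ (P *ᵥ u) = u ⬝ᵥ (Γ⁻¹ *ᵥ u) + u ⬝ᵥ ((Hᵀ * Ψ⁻¹ * H) *ᵥ u) := by
    rw [hPdef, add_mulVec, dotProduct_add]
  simp only [mulVec_sub, sub_dotProduct, dotProduct_sub,
    mulVec_dotProduct_eq_dotProduct_transpose_mulVec, mulVec_mulVec, ← Matrix.mul_assoc,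
    hKHΨ, hPK, hKP, hPuu, sub_mulVec]
  ring

/-- The joint density of `(U, HU + W)` factors as marginal times conditional. -/
lemma gaussPdf_mul_gaussPdf (hΨ : Ψ.PosDef) (hΓ : Γ.PosDef) (H : Matrix κ ι ℝ)
    (ξ y : κ → ℝ) (u : ι → ℝ) :
    gaussPdf 0 Γ u * gaussPdf (ξ + H *ᵥ u) Ψ y =
      gaussPdf ξ (Ψ + H * Γ * Hᵀ) y *
        gaussPdf ((Γ * Hᵀ * (Ψ + H * Γ * Hᵀ)⁻¹) *ᵥ (y - ξ))
          (Γ - Γ * Hᵀ * (Ψ + H * Γ * Hᵀ)⁻¹ * H * Γ) u := by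
  have hquad := quadratic_add_quadratic_sub_mulVec hΨ hΓ H u (y - ξ)
  have hdet := congrArg (· ^ (-(1 : ℝ) / 2)) (det_mul_det_conditional_covariance hΨ hΓ H)
  simp only [Real.mul_rpow hΓ.det_pos.le hΨ.det_pos.le,
    Real.mul_rpow (posDef_add_mul_mul_transpose hΨ hΓ H).det_pos.le
      (posDef_conditional_covariance hΨ hΓ H).det_pos.le] at hdet
  have hinv : (Γ - Γ * Hᵀ * (Ψ + H * Γ * Hᵀ)⁻¹ * H * Γ)⁻¹ = Γ⁻¹ + Hᵀ * Ψ⁻¹ * H := by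
    rw [conditional_covariance_eq_inv hΨ hΓ, nonsing_inv_nonsing_inv _
      ((isUnit_iff_isUnit_det _).mp (posDef_inv_add_transpose_mul_inv_mul hΨ hΓ H).isUnit)]
  have hexp : ∀ a b c d : ℝ, a + b = c + d →
      Real.exp (-a / 2) * Real.exp (-b / 2) = Real.exp (-c / 2) * Real.exp (-d / 2) := by
    intro a b c d h
    rw [← Real.exp_add, ← Real.exp_add]
    congr 1
    linarith
  have hprod := congrArg₂ (· * ·) (hexp _ _ _ _ hquad) hdet.symm
  simp only [gaussPdf, hinv, sub_zero, ← sub_sub] at hprod ⊢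
  linear_combination (2 * Real.pi) ^ (-(Fintype.card ι : ℝ) / 2) *
    (2 * Real.pi) ^ (-(Fintype.card κ : ℝ) / 2) * hprod

end ConvolutionAlgebra

/-- the density of `Y = ξ + H U + W`, with `U =_d (W₀ | W₀ + τ > 0)`,
`W₀ ~ N_m(0, Γ̄)`, `W ~ N_d(0, Ψ)` independent, is the SUN density
`φ_d(y; ξ, Ψ + HΓ̄Hᵀ) Φ_m(μ(y)+τ; 0, Σ*) / Φ_m(τ; 0, Γ̄)`. -/
theorem sun_convolution_density
    (d m : ℕ) (ξ : Fin d → ℝ) (τ : Fin m → ℝ) (H : Matrix (Fin d) (Fin m) ℝ)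
    (Ψ : Matrix (Fin d) (Fin d) ℝ) (Γ : Matrix (Fin m) (Fin m) ℝ)
    (hΨ : Ψ.PosDef) (hΓ : Γ.PosDef) :
    Measure.map (fun p : (Fin m → ℝ) × (Fin d → ℝ) => ξ + H *ᵥ p.1 + p.2)
        ((ProbabilityTheory.cond
            (volume.withDensity fun u => ENNReal.ofReal (gaussPdf (0 : Fin m → ℝ) Γ u))
            {u : Fin m → ℝ | ∀ i, 0 < u i + τ i}).prod
          (volume.withDensity fun w => ENNReal.ofReal (gaussPdf (0 : Fin d → ℝ) Ψ w))) =
      volume.withDensity (fun y => ENNReal.ofReal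
        (gaussPdf ξ (Ψ + H * Γ * Hᵀ) y *
          gaussCdf (Γ - Γ * Hᵀ * (Ψ + H * Γ * Hᵀ)⁻¹ * H * Γ)
            ((Γ * Hᵀ * (Ψ + H * Γ * Hᵀ)⁻¹) *ᵥ (y - ξ) + τ) /
          gaussCdf Γ τ)) := by
  set s : Set (Fin m → ℝ) := {u | ∀ i, 0 < u i + τ i} with hs_def
  have hs : MeasurableSet s := by rw [hs_def]; measurability
  have hΓm := (continuous_gaussPdf (0 : Fin m → ℝ) Γ).measurable.ennreal_ofReal
  have hHm : Continuous fun u : Fin m → ℝ ↦ ξ + H *ᵥ u := by fun_prop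
  have hjoint : Measurable fun p : (Fin m → ℝ) × (Fin d → ℝ) ↦
      ENNReal.ofReal (gaussPdf 0 Γ p.1 * gaussPdf (ξ + H *ᵥ p.1) Ψ p.2) := by
    have h (p : (Fin m → ℝ) × (Fin d → ℝ)) : gaussPdf (ξ + H *ᵥ p.1) Ψ p.2 =
        gaussPdf 0 Ψ (p.2 - (ξ + H *ᵥ p.1)) := gaussPdf_eq_of_sub_eq (by simp)
    simp only [h]
    have hΓc := continuous_gaussPdf (0 : Fin m → ℝ) Γ
    have hΨc := continuous_gaussPdf (0 : Fin d → ℝ) Ψ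
    exact ((hΓc.comp continuous_fst).mul (hΨc.comp
      (continuous_snd.sub (hHm.comp continuous_fst)))).measurable.ennreal_ofReal
  have hshift (u : Fin m → ℝ) {B : Set (Fin d → ℝ)} (hB : MeasurableSet B) :
      ∫⁻ w in (fun w ↦ ξ + H *ᵥ u + w) ⁻¹' B, ENNReal.ofReal (gaussPdf 0 Ψ w) =
        ∫⁻ y in B, ENNReal.ofReal (gaussPdf (ξ + H *ᵥ u) Ψ y) := by
    rw [← (measurePreserving_add_left volume (ξ + H *ᵥ u)).setLIntegral_comp_preimage hB
      (continuous_gaussPdf _ Ψ).measurable.ennreal_ofReal]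
    refine lintegral_congr fun w ↦ ?_
    rw [gaussPdf_eq_of_sub_eq (by simp : w - 0 = ξ + H *ᵥ u + w - (ξ + H *ᵥ u))]
  have hmarginal (y : Fin d → ℝ) :
      ∫⁻ u in s, ENNReal.ofReal (gaussPdf 0 Γ u * gaussPdf (ξ + H *ᵥ u) Ψ y) =
        ENNReal.ofReal (gaussPdf ξ (Ψ + H * Γ * Hᵀ) y *
          gaussCdf (Γ - Γ * Hᵀ * (Ψ + H * Γ * Hᵀ)⁻¹ * H * Γ)
            ((Γ * Hᵀ * (Ψ + H * Γ * Hᵀ)⁻¹) *ᵥ (y - ξ) + τ)) := by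
    have hnonneg := (gaussPdf_pos (posDef_add_mul_mul_transpose hΨ hΓ H) ξ y).le
    simp only [gaussPdf_mul_gaussPdf hΨ hΓ H ξ y, ENNReal.ofReal_mul hnonneg]
    rw [lintegral_const_mul _ (continuous_gaussPdf _ _).measurable.ennreal_ofReal,
      setLIntegral_gaussPdf (posDef_conditional_covariance hΨ hΓ H)]
  have hmass : (volume.withDensity fun u ↦ ENNReal.ofReal (gaussPdf (0 : Fin m → ℝ) Γ u)) s =
      ENNReal.ofReal (gaussCdf Γ τ) := by
    rw [withDensity_apply _ hs, setLIntegral_gaussPdf hΓ, zero_add]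
  have hmap : Measurable fun p : (Fin m → ℝ) × (Fin d → ℝ) ↦ ξ + H *ᵥ p.1 + p.2 :=
    ((hHm.comp continuous_fst).add continuous_snd).measurable
  ext B hB
  calc
    _ = (ENNReal.ofReal (gaussCdf Γ τ))⁻¹ *
        ∫⁻ u in s, ∫⁻ y in B, ENNReal.ofReal (gaussPdf 0 Γ u * gaussPdf (ξ + H *ᵥ u) Ψ y) := by
      rw [Measure.map_apply hmap hB, Measure.prod_apply (hmap hB), ProbabilityTheory.cond, hmass,
        lintegral_smul_measure, smul_eq_mul,
        setLIntegral_withDensity_eq_setLIntegral_mul _ hΓm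
          (measurable_measure_prodMk_left (hmap hB)) hs]
      congr 1
      refine lintegral_congr fun u ↦ ?_
      have hpre : MeasurableSet ((fun w : Fin d → ℝ ↦ ξ + H *ᵥ u + w) ⁻¹' B) :=
        measurable_const_add _ hB
      simp only [ENNReal.ofReal_mul (gaussPdf_pos hΓ 0 u).le]
      rw [lintegral_const_mul _ (continuous_gaussPdf _ _).measurable.ennreal_ofReal,
        ← hshift u hB, ← withDensity_apply _ hpre]
      rfl
    _ = (ENNReal.ofReal (gaussCdf Γ τ))⁻¹ *
        ∫⁻ y in B, ∫⁻ u in s, ENNReal.ofReal (gaussPdf 0 Γ u * gaussPdf (ξ + H *ᵥ u) Ψ y) := by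
      rw [lintegral_lintegral_swap hjoint.aemeasurable]
    _ = _ := by
      rw [withDensity_apply _ hB, ← lintegral_const_mul _ hjoint.lintegral_prod_left']
      refine lintegral_congr fun y ↦ ?_
      rw [hmarginal, ENNReal.ofReal_div_of_pos (gaussCdf_pos hΓ τ), ENNReal.div_eq_inv_mul]
end

section
/- Let (W*, W₀) be jointly Gaussian of dimension d + m with mean (ξ, 0) and covariance blocks Cov(W*) = Ψ + H Γ̄ Hᵀ, Cov(W*, W₀) = H Γ̄, Cov(W₀) = Γ̄. Then the conditional random vector (W* | W₀ + τ > 0) has the same distribution as Y = ξ + H U + W, where U =_d (W₀' | W₀' + τ > 0) with W₀' ~ N_m(0, Γ̄) independent of W ~ N_d(0, Ψ). -/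
open Matrix MeasureTheory ProbabilityTheory

/-- An invertible linear change of variables in the Gaussian density. -/
theorem gaussPdf_mul_mul_transpose {ι : Type*} [Fintype ι] [DecidableEq ι] (μ : ι → ℝ)
    {L D : Matrix ι ι ℝ} (hL : L.det ≠ 0) (hD : 0 ≤ D.det) (y : ι → ℝ) :
    gaussPdf μ (L * D * Lᵀ) (μ + L *ᵥ y) = |L.det|⁻¹ * gaussPdf 0 D y := by
  have hdet : (L * D * Lᵀ).det ^ (-(1 : ℝ) / 2) = |L.det|⁻¹ * D.det ^ (-(1 : ℝ) / 2) := by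
    have : (L * D * Lᵀ).det = |L.det| ^ (2 : ℝ) * D.det := by
      simp only [det_mul, det_transpose, Real.rpow_two, sq_abs]
      ring
    rw [this, Real.mul_rpow (by positivity) hD, ← Real.rpow_mul (abs_nonneg _)]
    norm_num [Real.rpow_neg_one]
  have hLL : L⁻¹ * L = 1 := nonsing_inv_mul L (isUnit_iff_ne_zero.2 hL)
  have hquad : (L *ᵥ y) ⬝ᵥ ((L * D * Lᵀ)⁻¹ *ᵥ (L *ᵥ y)) = y ⬝ᵥ (D⁻¹ *ᵥ y) := by
    have hT : Lᵀ * Lᵀ⁻¹ = 1 := by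
      rw [← transpose_nonsing_inv, ← transpose_mul, hLL, transpose_one]
    rw [Matrix.mul_inv_rev, Matrix.mul_inv_rev, mulVec_mulVec, Matrix.mul_assoc,
      Matrix.mul_assoc, hLL, Matrix.mul_one, ← mulVec_mulVec, ← vecMul_transpose,
      ← dotProduct_mulVec, mulVec_mulVec, hT, one_mulVec]
  simp only [gaussPdf, add_sub_cancel_left, sub_zero, hdet, hquad]
  ring

/-- The standard Gaussian density is the product of its one-dimensional marginals. -/
theorem gaussPdf_zero_one {ι : Type*} [Fintype ι] [DecidableEq ι] (x : ι → ℝ) :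
    gaussPdf 0 1 x = ∏ i, gaussianPDFReal 0 1 (x i) := by
  have h : (2 * Real.pi) ^ (-(Fintype.card ι : ℝ) / 2) =
      ((√(2 * Real.pi))⁻¹) ^ Fintype.card ι := by
    rw [Real.sqrt_eq_rpow, ← Real.rpow_neg (by positivity), ← Real.rpow_natCast,
      ← Real.rpow_mul (by positivity)]
    congr 1
    ring
  simp only [gaussPdf, gaussianPDFReal, NNReal.coe_one, mul_one, Finset.prod_mul_distrib,
    Finset.prod_const, Finset.card_univ, ← Real.exp_sum, ← h, Matrix.det_one, Real.one_rpow,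
    inv_one, Matrix.one_mulVec, sub_zero, dotProduct, Finset.sum_div,
    Finset.sum_neg_distrib, neg_div, pow_two]

theorem measurable_gaussPdf {ι : Type*} [Fintype ι] [DecidableEq ι] (μ : ι → ℝ)
    (S : Matrix ι ι ℝ) : Measurable (gaussPdf μ S) := by
  refine Continuous.measurable ?_
  unfold gaussPdf
  fun_prop

theorem lintegral_gaussPdf_zero_one {ι : Type*} [Fintype ι] [DecidableEq ι] :
    ∫⁻ x : ι → ℝ, ENNReal.ofReal (gaussPdf 0 1 x) = 1 := by
  simp only [gaussPdf_zero_one]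
  rw [volume_pi, ← ofReal_integral_eq_lintegral_ofReal
    (Integrable.fintype_prod fun _ => integrable_gaussianPDFReal 0 1)
    (.of_forall fun x => Finset.prod_nonneg fun i _ => gaussianPDFReal_nonneg 0 1 (x i)),
    ← volume_pi, integral_fintype_prod_volume_eq_prod fun (_ : ι) => gaussianPDFReal 0 1]
  simp [integral_gaussianPDFReal_eq_one]

/-- The centred Gaussian density with positive definite covariance has total mass one. -/
theorem lintegral_gaussPdf_zero {ι : Type*} [Fintype ι] [DecidableEq ι] {S : Matrix ι ι ℝ}
    (hS : S.PosDef) : ∫⁻ x : ι → ℝ, ENNReal.ofReal (gaussPdf 0 S x) = 1 := by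
  obtain ⟨L, rfl⟩ : ∃ L : Matrix ι ι ℝ, S = L * Lᵀ := by
    open scoped MatrixOrder Matrix.Norms.L2Operator in
    obtain ⟨B, hB⟩ := CStarAlgebra.nonneg_iff_eq_star_mul_self.mp hS.posSemidef.nonneg
    exact ⟨Bᵀ, by simpa [Matrix.star_eq_conjTranspose,
      Matrix.conjTranspose_eq_transpose_of_trivial] using hB⟩
  have hL : L.det ≠ 0 := fun h => hS.det_pos.ne' (by rw [Matrix.det_mul, h, zero_mul])
  have hvol := Real.map_matrix_volume_pi_eq_smul_volume_pi hL
  have hmeas : Measurable fun x : ι → ℝ => ENNReal.ofReal (gaussPdf 0 (L * Lᵀ) x) :=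
    (measurable_gaussPdf _ _).ennreal_ofReal
  have hmap := lintegral_map (μ := volume) hmeas
    (LinearMap.continuous_of_finiteDimensional (Matrix.toLin' L)).measurable
  have hpdf (y : ι → ℝ) : gaussPdf 0 (L * Lᵀ) (Matrix.toLin' L y) =
      |L.det|⁻¹ * gaussPdf 0 1 y := by
    simpa using gaussPdf_mul_mul_transpose 0 (D := 1) hL (by simp) y
  have hone := lintegral_gaussPdf_zero_one (ι := ι)
  have hpos : ENNReal.ofReal |L.det|⁻¹ ≠ 0 := by simpa using hL
  simp only [hpdf, ENNReal.ofReal_mul (inv_nonneg.2 (abs_nonneg L.det))] at hmap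
  rw [hvol, lintegral_smul_measure, lintegral_const_mul _
    (measurable_gaussPdf _ _).ennreal_ofReal, hone, abs_inv, smul_eq_mul] at hmap
  exact (ENNReal.mul_right_inj hpos ENNReal.ofReal_ne_top).1 hmap

/-- The joint density of `(ξ + H u + w, u)` is the product of the densities of `u` and `w`. -/
theorem gaussPdf_fromBlocks_shear {ι κ : Type*} [Fintype ι] [DecidableEq ι] [Fintype κ]
    [DecidableEq κ] (ξ : ι → ℝ) (H : Matrix ι κ ℝ) {Ψ : Matrix ι ι ℝ} {Γ : Matrix κ κ ℝ}
    (hΨ : Ψ.PosDef) (hΓ : Γ.PosDef) (u : κ → ℝ) (w : ι → ℝ) :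
    gaussPdf (Sum.elim ξ (0 : κ → ℝ))
        (fromBlocks (Ψ + H * Γ * Hᵀ) (H * Γ) (Γ * Hᵀ) Γ) (Sum.elim (ξ + H *ᵥ u + w) u) =
      gaussPdf 0 Γ u * gaussPdf 0 Ψ w := by
  have hcov : fromBlocks (Ψ + H * Γ * Hᵀ) (H * Γ) (Γ * Hᵀ) Γ =
      fromBlocks 1 H 0 1 * fromBlocks Ψ 0 0 Γ * (fromBlocks 1 H 0 1)ᵀ := by
    simp [fromBlocks_multiply, fromBlocks_transpose]
  have hvec : Sum.elim (ξ + H *ᵥ u + w) u =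
      Sum.elim ξ (0 : κ → ℝ) + fromBlocks 1 H 0 1 *ᵥ Sum.elim w u := by
    rw [fromBlocks_mulVec]
    ext (i | i)
    · simp
      ring
    · simp
  have hdet : (fromBlocks Ψ 0 0 Γ).det = Ψ.det * Γ.det := det_fromBlocks_zero₂₁ _ _ _
  have hinv : (fromBlocks Ψ 0 0 Γ)⁻¹ = fromBlocks Ψ⁻¹ 0 0 Γ⁻¹ := by
    rw [inv_fromBlocks_zero₂₁_of_isUnit_iff _ _ _ (iff_of_true hΨ.isUnit hΓ.isUnit)]
    simp
  rw [hcov, hvec, gaussPdf_mul_mul_transpose _ (by simp)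
    (by rw [hdet]; exact (mul_pos hΨ.det_pos hΓ.det_pos).le)]
  have hcard : (2 * Real.pi) ^ (-(Fintype.card (ι ⊕ κ) : ℝ) / 2) =
      (2 * Real.pi) ^ (-(Fintype.card ι : ℝ) / 2) *
        (2 * Real.pi) ^ (-(Fintype.card κ : ℝ) / 2) := by
    rw [← Real.rpow_add (by positivity), Fintype.card_sum]
    congr 1
    push_cast
    ring
  have hquad : Sum.elim w u ⬝ᵥ (fromBlocks Ψ⁻¹ 0 0 Γ⁻¹ *ᵥ Sum.elim w u) =
      w ⬝ᵥ (Ψ⁻¹ *ᵥ w) + u ⬝ᵥ (Γ⁻¹ *ᵥ u) := by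
    rw [fromBlocks_mulVec, sumElim_dotProduct_sumElim]
    simp
  have hexp (a b : ℝ) : Real.exp (-(a + b) / 2) = Real.exp (-a / 2) * Real.exp (-b / 2) := by
    rw [← Real.exp_add]
    congr 1
    ring
  simp only [gaussPdf, sub_zero, hinv, hquad, hdet, hcard, hexp,
    Real.mul_rpow hΨ.det_pos.le hΓ.det_pos.le, det_fromBlocks_zero₂₁, det_one, mul_one, abs_one,
    inv_one, one_mul]
  ring

/-- A measure-preserving map transports a density along composition. -/
theorem MeasureTheory.MeasurePreserving.map_withDensity_comp {α β : Type*} [MeasurableSpace α]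
    [MeasurableSpace β] {μ : Measure α} {ν : Measure β} {e : α → β}
    (he : MeasurePreserving e μ ν) {f : β → ENNReal} (hf : Measurable f) :
    Measure.map e (μ.withDensity fun x => f (e x)) = ν.withDensity f := by
  ext s hs
  rw [Measure.map_apply he.measurable hs, withDensity_apply _ (he.measurable hs),
    withDensity_apply _ hs, he.setLIntegral_comp_preimage hs hf]

theorem measurePreserving_shear {ι κ : Type*} [Fintype ι] [Fintype κ] (ξ : ι → ℝ)
    (H : Matrix ι κ ℝ) :
    MeasurePreserving (fun p : (κ → ℝ) × (ι → ℝ) => (ξ + H *ᵥ p.1 + p.2, p.1))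
      volume volume := by
  have hskew : MeasurePreserving (fun p : (κ → ℝ) × (ι → ℝ) => (p.1, ξ + H *ᵥ p.1 + p.2))
      (volume.prod volume) (volume.prod volume) :=
    (MeasurePreserving.id volume).skew_product
      (g := fun (u : κ → ℝ) (w : ι → ℝ) => ξ + H *ᵥ u + w)
      (Continuous.measurable (by unfold Function.uncurry; fun_prop))
      (.of_forall fun u => map_add_left_eq_self volume (ξ + H *ᵥ u))
  exact Measure.measurePreserving_swap.comp hskew

/-- the selection representation `(W* | W₀ + τ > 0)` of the SUN
distribution, where `(W*, W₀)` is jointly Gaussian with mean `(ξ, 0)` and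
covariance blocks `Ψ + HΓ̄Hᵀ`, `HΓ̄`, `Γ̄Hᵀ`, `Γ̄`, has the same law as the
convolution representation `Y = ξ + H U + W` with `U =_d (W₀' | W₀' + τ > 0)`,
`W₀' ~ N_m(0, Γ̄)` independent of `W ~ N_d(0, Ψ)`. -/
theorem sun_selection_eq_convolution
    (d m : ℕ) (ξ : Fin d → ℝ) (τ : Fin m → ℝ) (H : Matrix (Fin d) (Fin m) ℝ)
    (Ψ : Matrix (Fin d) (Fin d) ℝ) (Γ : Matrix (Fin m) (Fin m) ℝ)
    (hΨ : Ψ.PosDef) (hΓ : Γ.PosDef) :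
    Measure.map (fun p : (Fin d → ℝ) × (Fin m → ℝ) => p.1)
        (ProbabilityTheory.cond
          (volume.withDensity fun p : (Fin d → ℝ) × (Fin m → ℝ) =>
            ENNReal.ofReal (gaussPdf (Sum.elim ξ (0 : Fin m → ℝ))
              (Matrix.fromBlocks (Ψ + H * Γ * Hᵀ) (H * Γ) (Γ * Hᵀ) Γ)
              (Sum.elim p.1 p.2)))
          {p : (Fin d → ℝ) × (Fin m → ℝ) | ∀ i, 0 < p.2 i + τ i}) =
      Measure.map (fun p : (Fin m → ℝ) × (Fin d → ℝ) => ξ + H *ᵥ p.1 + p.2)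
        ((ProbabilityTheory.cond
            (volume.withDensity fun u => ENNReal.ofReal (gaussPdf (0 : Fin m → ℝ) Γ u))
            {u : Fin m → ℝ | ∀ i, 0 < u i + τ i}).prod
          (volume.withDensity fun w => ENNReal.ofReal (gaussPdf (0 : Fin d → ℝ) Ψ w))) := by
  set μU := volume.withDensity fun u => ENNReal.ofReal (gaussPdf (0 : Fin m → ℝ) Γ u) with hμU
  set μW := volume.withDensity fun w => ENNReal.ofReal (gaussPdf (0 : Fin d → ℝ) Ψ w) with hμW
  set S := {u : Fin m → ℝ | ∀ i, 0 < u i + τ i} with hS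
  set A := {p : (Fin d → ℝ) × (Fin m → ℝ) | ∀ i, 0 < p.2 i + τ i} with hA
  have hSm : MeasurableSet S := by
    rw [hS, Set.ofPred_forall]
    exact .iInter fun i => measurableSet_lt (by fun_prop) (by fun_prop)
  have hAm : MeasurableSet A := measurable_snd hSm
  have hUm : Measurable fun u => ENNReal.ofReal (gaussPdf (0 : Fin m → ℝ) Γ u) :=
    (measurable_gaussPdf _ _).ennreal_ofReal
  have hWm : Measurable fun w => ENNReal.ofReal (gaussPdf (0 : Fin d → ℝ) Ψ w) :=
    (measurable_gaussPdf _ _).ennreal_ofReal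
  have hW : μW Set.univ = 1 := by
    rw [hμW, withDensity_apply _ .univ, Measure.restrict_univ, lintegral_gaussPdf_zero hΨ]
  have he := measurePreserving_shear ξ H
  have hjoint := he.map_withDensity_comp
    (f := fun p => ENNReal.ofReal (gaussPdf (Sum.elim ξ (0 : Fin m → ℝ))
      (Matrix.fromBlocks (Ψ + H * Γ * Hᵀ) (H * Γ) (Γ * Hᵀ) Γ) (Sum.elim p.1 p.2)))
    ((measurable_gaussPdf _ _).comp (measurable_pi_iff.2 (by
      rintro (i | i) <;> simp only [Sum.elim_inl, Sum.elim_inr] <;> fun_prop))).ennreal_ofReal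
  have hnonneg (u : Fin m → ℝ) : 0 ≤ gaussPdf 0 Γ u := by
    have := hΓ.det_pos
    unfold gaussPdf
    positivity
  simp only [gaussPdf_fromBlocks_shear ξ H hΨ hΓ, ENNReal.ofReal_mul (hnonneg _)] at hjoint
  rw [Measure.volume_eq_prod, ← prod_withDensity hUm hWm, ← hμU, ← hμW] at hjoint
  have hpre : (fun p : (Fin m → ℝ) × (Fin d → ℝ) => (ξ + H *ᵥ p.1 + p.2, p.1)) ⁻¹' A =
      S ×ˢ Set.univ := by
    ext p
    simp [hA, hS]
  rw [← hjoint, ProbabilityTheory.cond, ProbabilityTheory.cond,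
    Measure.restrict_map he.measurable hAm, Measure.map_apply he.measurable hAm, hpre,
    Measure.prod_prod, hW, mul_one, Measure.prod_smul_left, Measure.map_smul, Measure.map_smul,
    Measure.map_map measurable_fst he.measurable, ← Measure.prod_restrict, Measure.restrict_univ]
  rfl
end
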